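/- Let X be a Banach function space over a finite measure space (S,𝒜,μ) and m : Σ → X a σ-additive vector measure. Assume: (a) both X and X* have the subsequence splitting property; (b) the range m(Σ) of m has uniformly a.c. norm in X. Then the Banach function space L¹(m), regarded as a B.f.s. over (Ω,Σ,η) for a Rybakov control measure η of m, has the subsequence splitting property. -/

import Mathlib

open MeasureTheory Filter Topology
open scoped ENNReal

noncomputable section

namespace Paper

variable {Ω : Type*} [MeasurableSpace Ω]
variable {X : Type*} [NormedAddCommGroup X] [NormedSpace ℝ X]

/-- The signed measure `x* ∘ m` for a functional `x*` and vector measure `m`. -/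
def dualApply (m : VectorMeasure Ω X) (x : X →L[ℝ] ℝ) : SignedMeasure Ω :=
  m.mapRange x.toLinearMap.toAddMonoidHom x.continuous

/-- The semivariation `‖m‖(A)` of a vector measure. -/
def semivar (m : VectorMeasure Ω X) (A : Set Ω) : ℝ≥0∞ :=
  ⨆ x : {x : X →L[ℝ] ℝ // ‖x‖ ≤ 1}, (dualApply m x.1).totalVariation A

/-- `P` holds `‖m‖`-almost everywhere. -/
def MAE (m : VectorMeasure Ω X) (P : Ω → Prop) : Prop :=
  ∃ N : Set Ω, MeasurableSet N ∧ semivar m N = 0 ∧ ∀ ω ∉ N, P ω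

/-- The integral `∫_A f ds` of a real function with respect to a signed measure. -/
def sIntegral (s : SignedMeasure Ω) (f : Ω → ℝ) (A : Set Ω) : ℝ :=
  (∫ ω in A, f ω ∂s.toJordanDecomposition.posPart) -
    ∫ ω in A, f ω ∂s.toJordanDecomposition.negPart

/-- `f` is integrable with respect to the vector measure `m` (Bartle-Dunford-Schwartz). -/
def MIntegrable (m : VectorMeasure Ω X) (f : Ω → ℝ) : Prop :=
  Measurable f ∧
  (∀ x : X →L[ℝ] ℝ, Integrable f ((dualApply m x).totalVariation)) ∧
  (∀ A : Set Ω, MeasurableSet A →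
    ∃ v : X, ∀ x : X →L[ℝ] ℝ, x v = sIntegral (dualApply m x) f A)

open Classical in
/-- The vector integral `∫_A f dm ∈ X`. -/
def mIntegral (m : VectorMeasure Ω X) (f : Ω → ℝ) (A : Set Ω) : X :=
  if h : ∃ v : X, ∀ x : X →L[ℝ] ℝ, x v = sIntegral (dualApply m x) f A then h.choose
  else 0

/-- The norm of `L¹(m)`: `‖f‖ = sup_{‖x*‖ ≤ 1} ∫ |f| d|x*m|`. -/
def mNorm (m : VectorMeasure Ω X) (f : Ω → ℝ) : ℝ :=
  ⨆ x : {x : X →L[ℝ] ℝ // ‖x‖ ≤ 1}, ∫ ω, |f ω| ∂(dualApply m x.1).totalVariation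

/-- The vector measure `m` is separable: the pseudometric space `(Σ, d_m)`,
`d_m(A,B) = ‖m‖(A △ B)`, is separable. -/
def SeparableVM (m : VectorMeasure Ω X) : Prop :=
  ∃ D : Set (Set Ω), D.Countable ∧ (∀ B ∈ D, MeasurableSet B) ∧
    ∀ A : Set Ω, MeasurableSet A → ∀ ε : ℝ, 0 < ε →
      ∃ B ∈ D, semivar m (symmDiff A B) < ENNReal.ofReal ε

section FunctionSpace

variable {S : Type*} [MeasurableSpace S]

/-- `T` is a bounded linear functional on the function space determined by the
membership predicate `mem` and the norm `nrm`. -/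
def IsBddLinFunctional (mem : (S → ℝ) → Prop) (nrm : (S → ℝ) → ℝ)
    (T : (S → ℝ) → ℝ) : Prop :=
  (∀ f g, mem f → mem g → T (f + g) = T f + T g) ∧
  (∀ (c : ℝ) (f), mem f → T (c • f) = c * T f) ∧
  (∃ C : ℝ, ∀ f, mem f → |T f| ≤ C * nrm f)

/-- `f` is a weakly null sequence in the function space `(mem, nrm)`. -/
def WeaklyNullSeq (mem : (S → ℝ) → Prop) (nrm : (S → ℝ) → ℝ) (f : ℕ → S → ℝ) : Prop :=
  ∀ T : (S → ℝ) → ℝ, IsBddLinFunctional mem nrm T →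
    Tendsto (fun n => T (f n)) atTop (nhds 0)

/-- The set `K` has uniformly absolutely continuous norm in the function space with
norm `nrm` over the measure `μ`. -/
def UnifACNorm (μ : Measure S) (nrm : (S → ℝ) → ℝ) (K : Set (S → ℝ)) : Prop :=
  ∀ ε : ℝ, 0 < ε → ∃ δ : ℝ, 0 < δ ∧ ∀ A : Set S, MeasurableSet A →
    μ A < ENNReal.ofReal δ → ∀ f ∈ K, nrm (A.indicator f) ≤ ε

/-- The subsequence splitting property for the function space `(mem, nrm)` over `μ`. -/
def HasSSP (μ : Measure S) (mem : (S → ℝ) → Prop) (nrm : (S → ℝ) → ℝ) : Prop :=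
  ∀ f : ℕ → S → ℝ, (∀ n, mem (f n)) → (∃ C : ℝ, ∀ n, nrm (f n) ≤ C) →
    ∃ σ : ℕ → ℕ, StrictMono σ ∧
      ∃ g h : ℕ → S → ℝ,
        (∀ n, mem (g n)) ∧ (∀ n, mem (h n)) ∧
        (∀ n, f (σ n) = g n + h n) ∧
        (∀ n, (fun s => g n s * h n s) =ᵐ[μ] 0) ∧
        UnifACNorm μ nrm (Set.range g) ∧
        (∀ i j, i ≠ j → (fun s => h i s * h j s) =ᵐ[μ] 0)

/-- The weak Banach-Saks property for the function space `(mem, nrm)`. -/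
def HasWBS (mem : (S → ℝ) → Prop) (nrm : (S → ℝ) → ℝ) : Prop :=
  ∀ f : ℕ → S → ℝ, (∀ n, mem (f n)) → WeaklyNullSeq mem nrm f →
    ∃ σ : ℕ → ℕ, StrictMono σ ∧
      Tendsto (fun n : ℕ => nrm ((n : ℝ)⁻¹ • ∑ k ∈ Finset.range n, f (σ k))) atTop (nhds 0)

end FunctionSpace

/-- A Banach function space over `(S, μ)`: an (abstract) normed space `X` together with
a linear embedding `J` into measurable functions on `S`, separating points modulo
`μ`-null sets and satisfying the ideal property. -/
structure BFS (S : Type*) [MeasurableSpace S] (μ : Measure S)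
    (X : Type*) [NormedAddCommGroup X] [NormedSpace ℝ X] where
  J : X →ₗ[ℝ] (S → ℝ)
  aemeasurable : ∀ x : X, AEMeasurable (J x) μ
  eq_zero : ∀ x : X, J x =ᵐ[μ] 0 → x = 0
  ideal : ∀ (x : X) (g : S → ℝ), AEMeasurable g μ →
    (∀ᵐ s ∂μ, |g s| ≤ |J x s|) → ∃ y : X, J y =ᵐ[μ] g ∧ ‖y‖ ≤ ‖x‖

variable {S : Type*} [MeasurableSpace S] {μ : Measure S}

/-- The set `K ⊆ X` has uniformly absolutely continuous norm in the B.f.s. `X`. -/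
def BFS.UnifAC (B : BFS S μ X) (K : Set X) : Prop :=
  ∀ ε : ℝ, 0 < ε → ∃ δ : ℝ, 0 < δ ∧ ∀ A : Set S, MeasurableSet A →
    μ A < ENNReal.ofReal δ → ∀ x ∈ K, ∀ y : X, B.J y =ᵐ[μ] A.indicator (B.J x) → ‖y‖ ≤ ε

/-- The B.f.s. `X` has absolutely continuous norm. -/
def BFS.ACNorm (B : BFS S μ X) : Prop :=
  ∀ x : X, ∀ ε : ℝ, 0 < ε → ∃ δ : ℝ, 0 < δ ∧ ∀ A : Set S, MeasurableSet A →
    μ A < ENNReal.ofReal δ → ∀ y : X, B.J y =ᵐ[μ] A.indicator (B.J x) → ‖y‖ ≤ ε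

/-- The subsequence splitting property for the B.f.s. `X`. -/
def BFS.SSP (B : BFS S μ X) : Prop :=
  ∀ f : ℕ → X, (∃ C : ℝ, ∀ n, ‖f n‖ ≤ C) →
    ∃ σ : ℕ → ℕ, StrictMono σ ∧
      ∃ g h : ℕ → X,
        (∀ n, f (σ n) = g n + h n) ∧
        (∀ n, (fun s => B.J (g n) s * B.J (h n) s) =ᵐ[μ] 0) ∧
        B.UnifAC (Set.range g) ∧
        (∀ i j, i ≠ j → (fun s => B.J (h i) s * B.J (h j) s) =ᵐ[μ] 0)

/-- The weak Banach-Saks property for a normed space `Z`: every weakly null sequence has a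
subsequence whose arithmetic means converge to zero in norm. -/
def WeakBanachSaks (Z : Type*) [NormedAddCommGroup Z] [NormedSpace ℝ Z] : Prop :=
  ∀ z : ℕ → Z, (∀ φ : Z →L[ℝ] ℝ, Tendsto (fun n => φ (z n)) atTop (nhds 0)) →
    ∃ σ : ℕ → ℕ, StrictMono σ ∧
      Tendsto (fun n : ℕ => ‖(n : ℝ)⁻¹ • ∑ k ∈ Finset.range n, z (σ k)‖) atTop (nhds 0)


theorem BFS.ext' (B : BFS S μ X) {x y : X} (h : B.J x =ᵐ[μ] B.J y) : x = y := by
  rw [← sub_eq_zero]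
  apply B.eq_zero
  filter_upwards [h] with s hs
  simp [hs]

theorem BFS.norm_mono (B : BFS S μ X) {x y : X} (h : ∀ᵐ s ∂μ, |B.J x s| ≤ |B.J y s|) :
    ‖x‖ ≤ ‖y‖ := by
  obtain ⟨z, hz, hzn⟩ := B.ideal y (B.J x) (B.aemeasurable x) h
  rw [← B.ext' hz]
  exact hzn

theorem BFS.exists_abs (B : BFS S μ X) (x : X) :
    ∃ y : X, B.J y =ᵐ[μ] (fun s => |B.J x s|) ∧ ‖y‖ ≤ ‖x‖ := by
  have hm : AEMeasurable (fun s => |B.J x s|) μ := by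
    have := (B.aemeasurable x).norm
    simpa [Real.norm_eq_abs] using this
  exact B.ideal x (fun s => |B.J x s|) hm (by simp)

theorem BFS.norm_le_add (B : BFS S μ X) {x y z : X}
    (h : ∀ᵐ s ∂μ, |B.J x s| ≤ |B.J y s| + |B.J z s|) : ‖x‖ ≤ ‖y‖ + ‖z‖ := by
  obtain ⟨y', hy, hyn⟩ := B.exists_abs y
  obtain ⟨z', hz, hzn⟩ := B.exists_abs z
  have : ‖x‖ ≤ ‖y' + z'‖ := by
    apply B.norm_mono
    filter_upwards [h, hy, hz] with s h1 h2 h3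
    simp only [map_add, Pi.add_apply, h2, h3]
    exact h1.trans (le_abs_self _)
  linarith [norm_add_le y' z']

theorem BFS.exists_res (B : BFS S μ X) {A : Set S} (hA : MeasurableSet A) :
    ∃ R : X →L[ℝ] X, (∀ x, B.J (R x) =ᵐ[μ] A.indicator (B.J x)) ∧ ∀ x, ‖R x‖ ≤ ‖x‖ := by
  have key : ∀ x : X, ∃ y : X, B.J y =ᵐ[μ] A.indicator (B.J x) ∧ ‖y‖ ≤ ‖x‖ := by
    intro x
    apply B.ideal x _ ((B.aemeasurable x).indicator hA)
    refine Eventually.of_forall fun s => ?_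
    by_cases hs : s ∈ A <;> simp [hs]
  choose r hr hrn using key
  let R : X →ₗ[ℝ] X :=
    { toFun := r
      map_add' := by
        intro x y
        apply B.ext'
        filter_upwards [hr (x + y), hr x, hr y] with s h1 h2 h3
        by_cases hs : s ∈ A <;> simp [h1, h2, h3, hs]
      map_smul' := by
        intro c x
        apply B.ext'
        filter_upwards [hr (c • x), hr x] with s h1 h2
        by_cases hs : s ∈ A <;> simp [h1, h2, hs] }
  exact ⟨R.mkContinuous 1 (fun x => by rw [one_mul]; exact hrn x), hr, hrn⟩

/-- Rademacher averages. -/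
def rad {V W : Type*} [AddCommGroup V] [AddCommGroup W] [Module ℝ W] (v : ℕ → V) (F : V → W) :
    ℕ → V → W
  | 0, x => F x
  | n + 1, x => (1 / 2 : ℝ) • (rad v F n (x + v n) + rad v F n (x - v n))

theorem rad_sq (b : ℕ → ℝ) (n : ℕ) (x : ℝ) :
    rad b (fun y => y ^ 2) n x = x ^ 2 + ∑ j ∈ Finset.range n, b j ^ 2 := by
  induction n generalizing x with
  | zero => simp [rad]
  | succ n ih => simp only [rad, ih, Finset.sum_range_succ, smul_eq_mul]; ring

theorem rad_four (b : ℕ → ℝ) (n : ℕ) (x : ℝ) :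
    rad b (fun y => y ^ 4) n x ≤ x ^ 4 + 6 * x ^ 2 * (∑ j ∈ Finset.range n, b j ^ 2)
      + 3 * (∑ j ∈ Finset.range n, b j ^ 2) ^ 2 := by
  induction n generalizing x with
  | zero => simp [rad]
  | succ n ih =>
    simp only [rad, Finset.sum_range_succ, smul_eq_mul]
    have h1 := ih (x + b n)
    have h2 := ih (x - b n)
    nlinarith [sq_nonneg (b n ^ 2)]

theorem rad_lin (b : ℕ → ℝ) (F G H : ℝ → ℝ) (α β : ℝ)
    (h : ∀ x, α * F x - β * G x ≤ H x) (n : ℕ) (x : ℝ) :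
    α * rad b F n x - β * rad b G n x ≤ rad b H n x := by
  induction n generalizing x with
  | zero => exact h x
  | succ n ih =>
    simp only [rad, smul_eq_mul]
    have h1 := ih (x + b n)
    have h2 := ih (x - b n)
    linarith

theorem rad_abs_nonneg (b : ℕ → ℝ) (n : ℕ) (x : ℝ) : 0 ≤ rad b (fun y => |y|) n x := by
  have := rad_lin b (fun _ => 0) (fun _ => 0) (fun y => |y|) 0 0 (by simp) n x
  linarith

theorem khintchine (b : ℕ → ℝ) (n : ℕ) :
    (∑ j ∈ Finset.range n, b j ^ 2) ≤ 9 * (rad b (fun y => |y|) n 0) ^ 2 := by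
  set Q := ∑ j ∈ Finset.range n, b j ^ 2 with hQ
  have hQ0 : 0 ≤ Q := Finset.sum_nonneg fun j _ => sq_nonneg _
  rcases hQ0.eq_or_lt with h0 | hpos
  · rw [← h0]; positivity
  set σ := Real.sqrt Q with hσ
  have hσpos : 0 < σ := Real.sqrt_pos.mpr hpos
  have hσ2 : σ ^ 2 = Q := Real.sq_sqrt hQ0
  have hpt : ∀ x : ℝ, (3 / 4 / σ) * x ^ 2 - (1 / 8 / σ ^ 3) * x ^ 4 ≤ |x| := by
    intro x
    have e2 : x ^ 2 = |x| ^ 2 := (sq_abs x).symm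
    have e4 : x ^ 4 = |x| ^ 4 := by
      rw [show x ^ 4 = (x ^ 2) ^ 2 by ring, e2]; ring
    rw [e2, e4]
    obtain ⟨y, hy⟩ : ∃ y, |x| = y * σ := ⟨|x| / σ, by field_simp⟩
    have hy0 : 0 ≤ y := by
      by_contra hneg
      push Not at hneg
      have := mul_neg_of_neg_of_pos hneg hσpos
      linarith [abs_nonneg x]
    rw [hy]
    have : (3 / 4 / σ) * (y * σ) ^ 2 - (1 / 8 / σ ^ 3) * (y * σ) ^ 4
        = (3 / 4 * y ^ 2 - 1 / 8 * y ^ 4) * σ := by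
      field_simp
    rw [this]
    apply mul_le_mul_of_nonneg_right _ hσpos.le
    have h3 : 0 ≤ y ^ 3 - 6 * y + 8 := by
      nlinarith [mul_nonneg hy0 (sq_nonneg (y - 3 / 2)), sq_nonneg (y - 3 / 2), sq_nonneg (y - 1)]
    nlinarith [mul_nonneg hy0 h3]
  have hlin := rad_lin b _ _ _ _ _ hpt n 0
  have h2 := rad_sq b n 0
  have h4 := rad_four b n 0
  rw [← hQ] at h2 h4
  have h2' : rad b (fun y => y ^ 2) n 0 = σ ^ 2 := by rw [h2, hσ2]; ring
  have h4' : rad b (fun y => y ^ 4) n 0 ≤ 3 * σ ^ 4 := by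
    rw [show σ ^ 4 = (σ ^ 2) ^ 2 by ring, hσ2]; linarith
  rw [h2'] at hlin
  have h5 : (1 / 8 / σ ^ 3) * rad b (fun y => y ^ 4) n 0 ≤ (1 / 8 / σ ^ 3) * (3 * σ ^ 4) :=
    mul_le_mul_of_nonneg_left h4' (by positivity)
  have e1 : (1 / 8 / σ ^ 3) * (3 * σ ^ 4) = 3 / 8 * σ := by field_simp
  have e2 : (3 / 4 / σ) * σ ^ 2 = 3 / 4 * σ := by field_simp
  rw [e1] at h5
  rw [e2] at hlin
  have h6 : 3 / 8 * σ ≤ rad b (fun y => |y|) n 0 := by linarith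
  rw [← hσ2]
  nlinarith

theorem rad_norm_le (v : ℕ → X) (F : X → X) (hF : ∀ x, ‖F x‖ ≤ ‖x‖) (C : ℝ) (n : ℕ) (x : X)
    (h : ∀ θ : ℕ → ℝ, (∀ j, |θ j| ≤ 1) → ‖x + ∑ j ∈ Finset.range n, θ j • v j‖ ≤ C) :
    ‖rad v F n x‖ ≤ C := by
  induction n generalizing x with
  | zero =>
    have := h 0 (by simp)
    simp only [Finset.range_zero, Finset.sum_empty, add_zero] at this
    exact (hF x).trans this
  | succ n ih =>
    have key : ∀ e : ℝ, |e| ≤ 1 → ‖rad v F n (x + e • v n)‖ ≤ C := by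
      intro e he
      apply ih
      intro θ hθ
      have := h (Function.update θ n e) (by
        intro j
        by_cases hj : j = n
        · subst hj; simpa using he
        · simpa [hj] using hθ j)
      rw [Finset.sum_range_succ] at this
      have e1 : ∑ j ∈ Finset.range n, Function.update θ n e j • v j
          = ∑ j ∈ Finset.range n, θ j • v j := by
        apply Finset.sum_congr rfl
        intro j hj
        rw [Function.update_of_ne (Finset.mem_range.mp hj).ne]
      rw [e1, Function.update_self] at this
      rwa [add_assoc, add_comm (e • v n)]
    have h1 := key 1 (by simp)
    have h2 := key (-1) (by simp)
    rw [one_smul] at h1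
    rw [neg_one_smul, ← sub_eq_add_neg] at h2
    simp only [rad]
    rw [norm_smul]
    have := norm_add_le (rad v F n (x + v n)) (rad v F n (x - v n))
    have e : ‖(1 / 2 : ℝ)‖ = 1 / 2 := by norm_num
    rw [e]
    linarith

theorem BFS.rad_J (B : BFS S μ X) (v : ℕ → X) (F : X → X)
    (hF : ∀ x, B.J (F x) =ᵐ[μ] fun s => |B.J x s|) (n : ℕ) (x : X) :
    B.J (rad v F n x) =ᵐ[μ] fun s => rad (fun j => B.J (v j) s) (fun y => |y|) n (B.J x s) := by
  induction n generalizing x with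
  | zero => exact hF x
  | succ n ih =>
    filter_upwards [ih (x + v n), ih (x - v n)] with s h1 h2
    simp only [rad, map_smul, map_add, map_sub, Pi.smul_apply, Pi.add_apply, Pi.sub_apply] at *
    rw [h1, h2]

/-- Square function domination. -/
theorem BFS.exists_sq (B : BFS S μ X) (v : ℕ → X) (C : ℝ) (n : ℕ)
    (h : ∀ θ : ℕ → ℝ, (∀ j, |θ j| ≤ 1) → ‖∑ j ∈ Finset.range n, θ j • v j‖ ≤ C) :
    ∃ q : X, ‖q‖ ≤ C ∧ ∀ᵐ s ∂μ, ∑ j ∈ Finset.range n, (B.J (v j) s) ^ 2 ≤ 9 * (B.J q s) ^ 2 := by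
  choose F hF hFn using B.exists_abs
  refine ⟨rad v F n 0, rad_norm_le v F hFn C n 0 (by simpa using h), ?_⟩
  filter_upwards [B.rad_J v F hF n 0] with s hs
  rw [hs]
  simpa using khintchine (fun j => B.J (v j) s) n

theorem BFS.SSP.acNorm {B : BFS S μ X} (hX : B.SSP) (x : X) : B.UnifAC {x} := by
  intro ε hε
  obtain ⟨σ, -, g, h, hfg, -, hg, hh⟩ := hX (fun _ => x) ⟨‖x‖, fun _ => le_rfl⟩
  obtain ⟨δ, hδ, H⟩ := hg (ε / 2) (by positivity)
  refine ⟨δ, hδ, ?_⟩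
  rintro A hA hμ _ rfl y hy
  obtain ⟨R, hR, -⟩ := B.exists_res hA
  have h0 := H A hA hμ (g 0) ⟨0, rfl⟩ _ (hR _)
  have h1 := H A hA hμ (g 1) ⟨1, rfl⟩ _ (hR _)
  have := B.norm_le_add (x := y) (y := R (g 0)) (z := R (g 1)) (by
    filter_upwards [hy, hR (g 0), hR (g 1), hh 0 1 (by simp)] with s e1 e2 e3 e4
    by_cases hs : s ∈ A
    · simp only [hs, Set.indicator_of_mem] at e1 e2 e3
      rw [e1, e2, e3]
      have f0 := congrFun (congrArg B.J (hfg 0)) s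
      have f1 := congrFun (congrArg B.J (hfg 1)) s
      simp only [map_add, Pi.add_apply] at f0 f1
      simp only [Pi.zero_apply, mul_eq_zero] at e4
      rcases e4 with e | e
      · rw [f0, e, add_zero]; linarith [abs_nonneg (B.J (g 1) s)]
      · rw [f1, e, add_zero]; linarith [abs_nonneg (B.J (g 0) s)]
    · simp [e1, hs]; positivity)
  linarith

theorem BFS.key [IsFiniteMeasure μ] {B : BFS S μ X} (hX : B.SSP) (v : ℕ → ℕ → X) (C ε : ℝ)
    (hε : 0 < ε)
    (hb : ∀ n, ∀ θ : ℕ → ℝ, (∀ j, |θ j| ≤ 1) → ‖∑ j ∈ Finset.range n, θ j • v n j‖ ≤ C)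
    (hv : ∀ j, B.UnifAC (Set.range fun n => v n j))
    (hlow : ∀ n j, j < n → ε ≤ ‖v n j‖) : False := by
  choose q hqC hq using fun n => B.exists_sq (v n) C n (hb n)
  have hC : 0 ≤ C := (norm_nonneg _).trans (hqC 0)
  obtain ⟨σ, hσ, a, d, hfg, had, ha, hd⟩ := hX q ⟨C, hqC⟩
  have haC : ∀ n, ‖a n‖ ≤ C := by
    intro n
    refine le_trans (B.norm_mono ?_) (hqC (σ n))
    filter_upwards [had n] with s hs
    rw [hfg n]
    simp only [map_add, Pi.add_apply]
    rcases mul_eq_zero.mp hs with h | h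
    · simp [h]
    · simp [h]
  set t := ε / (4 * (C + 1)) with ht
  have htpos : 0 < t := by positivity
  have htC : t * C ≤ ε / 4 := by
    rw [ht, div_mul_eq_mul_div, div_le_div_iff₀ (by positivity) (by norm_num)]
    nlinarith
  obtain ⟨δ, hδ, hac⟩ := ha (ε / 7) (by positivity)
  obtain ⟨N, hN⟩ := exists_nat_gt (9 / t ^ 2 * μ.real Set.univ / δ)
  rw [div_lt_iff₀ hδ] at hN
  let d' : ℕ → S → ℝ := fun n => (B.aemeasurable (d n)).mk
  have hd'm : ∀ n, Measurable (d' n) := fun n => (B.aemeasurable (d n)).measurable_mk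
  have hd'e : ∀ n, B.J (d n) =ᵐ[μ] d' n := fun n => (B.aemeasurable (d n)).ae_eq_mk
  let D : ℕ → Set S := fun n => {s | d' n s ≠ 0}
  have hDm : ∀ n, MeasurableSet (D n) := fun n =>
    (measurableSet_eq_fun (hd'm n) measurable_const).compl
  have hDdisj : Pairwise (Function.onFun (AEDisjoint μ) D) := by
    intro i j hij
    change μ (D i ∩ D j) = 0
    have : ∀ᵐ s ∂μ, s ∉ D i ∩ D j := by
      filter_upwards [hd'e i, hd'e j, hd i j hij] with s h1 h2 h3
      rintro ⟨h4, h5⟩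
      rw [h1, h2] at h3
      exact (mul_ne_zero h4 h5) h3
    exact measure_eq_zero_iff_ae_notMem.mpr this
  have hDsum := tsum_measure_le_measure_univ (fun i => (hDm i).nullMeasurableSet) hDdisj
  have hDlim : Tendsto (fun n => μ (D n)) atTop (nhds 0) :=
    ENNReal.tendsto_atTop_zero_of_tsum_ne_top (ne_top_of_le_ne_top (measure_ne_top μ _) hDsum)
  choose δv hδv hvac using fun j => hv j (ε / 8) (by positivity)
  have hev : ∀ᶠ n in atTop, (∀ j ∈ Finset.range N, μ (D n) < ENNReal.ofReal (δv j)) ∧ N ≤ σ n := by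
    refine Eventually.and ?_ ?_
    · rw [Filter.eventually_all_finset]
      intro j _
      exact hDlim.eventually_lt_const (by simpa using hδv j)
    · exact hσ.tendsto_atTop.eventually_ge_atTop N
  obtain ⟨n, hn1, hn2⟩ := hev.exists
  have hqn : ∀ᵐ s ∂μ, s ∉ D n → ∑ j ∈ Finset.range N, (B.J (v (σ n) j) s) ^ 2
      ≤ 9 * (B.J (a n) s) ^ 2 := by
    filter_upwards [hq (σ n), hd'e n] with s h1 h2 h3
    have : B.J (d n) s = 0 := by rw [h2]; simpa [D] using h3
    rw [hfg n] at h1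
    simp only [map_add, Pi.add_apply, this, add_zero] at h1
    refine le_trans (Finset.sum_le_sum_of_subset_of_nonneg ?_ ?_) h1
    · exact Finset.range_mono hn2
    · intros; positivity
  let a' : S → ℝ := (B.aemeasurable (a n)).mk
  have ha'm : Measurable a' := (B.aemeasurable (a n)).measurable_mk
  have ha'e : B.J (a n) =ᵐ[μ] a' := (B.aemeasurable (a n)).ae_eq_mk
  let v' : ℕ → S → ℝ := fun j => (B.aemeasurable (v (σ n) j)).mk
  have hv'm : ∀ j, Measurable (v' j) := fun j => (B.aemeasurable (v (σ n) j)).measurable_mk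
  have hv'e : ∀ j, B.J (v (σ n) j) =ᵐ[μ] v' j := fun j => (B.aemeasurable (v (σ n) j)).ae_eq_mk
  let E : ℕ → Set S := fun j => {s | t * |a' s| < |v' j s|} \ D n
  have hEm : ∀ j, MeasurableSet (E j) := fun j =>
    (measurableSet_lt (ha'm.abs.const_mul t) (hv'm j).abs).diff (hDm n)
  have hq' : ∀ᵐ s ∂μ, s ∉ D n → ∀ j ∈ Finset.range N, |B.J (v (σ n) j) s| ≤ 3 * |B.J (a n) s| := by
    filter_upwards [hqn] with s hs hsD j hj
    have h1 := hs hsD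
    have h2 : (B.J (v (σ n) j) s) ^ 2 ≤ 9 * (B.J (a n) s) ^ 2 :=
      le_trans (Finset.single_le_sum (f := fun j => (B.J (v (σ n) j) s) ^ 2)
        (fun i _ => sq_nonneg _) hj) h1
    apply abs_le_of_sq_le_sq' _ (by positivity) |> abs_le.mpr
    rw [mul_pow, sq_abs]; linarith
  have hEδ : ∀ j ∈ Finset.range N, δ ≤ μ.real (E j) := by
    intro j hj
    by_contra hlt
    push Not at hlt
    have hμE : μ (E j) < ENNReal.ofReal δ := by
      rw [← ENNReal.ofReal_toReal (measure_ne_top μ (E j))]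
      exact (ENNReal.ofReal_lt_ofReal_iff hδ).mpr hlt
    obtain ⟨RD, hRD, -⟩ := B.exists_res (hDm n)
    obtain ⟨RE, hRE, -⟩ := B.exists_res (hEm j)
    set w := v (σ n) j with hw
    have h1 : ‖RD w‖ ≤ ε / 8 := hvac j (D n) (hDm n) (hn1 j hj) w ⟨σ n, rfl⟩ _ (hRD w)
    have h2 : ‖RE (a n)‖ ≤ ε / 7 := hac (E j) (hEm j) hμE (a n) ⟨n, rfl⟩ _ (hRE _)
    have h3 : ‖RE w‖ ≤ ‖(3 : ℝ) • RE (a n)‖ := by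
      apply B.norm_mono
      filter_upwards [hRE w, hRE (a n), hq'] with s e1 e2 e3
      rw [map_smul, Pi.smul_apply, e1, e2]
      by_cases hs : s ∈ E j
      · have := e3 hs.2 j hj
        simpa [hs, abs_mul] using this
      · simp [hs]
    have h4 : ‖w - RD w - RE w‖ ≤ ‖t • a n‖ := by
      apply B.norm_mono
      filter_upwards [hRE w, hRD w, ha'e, hv'e j] with s e1 e2 e3 e4
      simp only [map_sub, map_smul, Pi.smul_apply, Pi.sub_apply, e1, e2, smul_eq_mul, abs_mul,
        abs_of_pos htpos]
      by_cases hs : s ∈ D n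
      · have : s ∉ E j := fun h => h.2 hs
        simp only [hs, this, Set.indicator_of_mem, Set.indicator_of_notMem, not_false_eq_true,
          sub_self, sub_zero, abs_zero]
        positivity
      · by_cases hs' : s ∈ E j
        · simp only [hs, hs', Set.indicator_of_mem, Set.indicator_of_notMem, not_false_eq_true,
            sub_self, sub_zero, abs_zero]
          positivity
        · have : ¬ (t * |a' s| < |v' j s|) := fun h => hs' ⟨h, hs⟩
          simp only [hs, hs', Set.indicator_of_notMem, not_false_eq_true, sub_zero]
          rw [hw, e4, e3]
          linarith
    rw [norm_smul, Real.norm_of_nonneg htpos.le] at h4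
    rw [norm_smul] at h3
    have h3' : ‖(3 : ℝ)‖ = 3 := by norm_num
    rw [h3'] at h3
    have h5 : t * ‖a n‖ ≤ t * C := mul_le_mul_of_nonneg_left (haC n) htpos.le
    have h6 := hlow (σ n) j ((Finset.mem_range.mp hj).trans_le hn2)
    rw [← hw] at h6
    have h7 : ‖w‖ ≤ ‖w - RD w - RE w‖ + ‖RD w‖ + ‖RE w‖ := by
      calc ‖w‖ = ‖(w - RD w - RE w) + RD w + RE w‖ := by congr 1; abel
        _ ≤ _ := norm_add₃_le
    linarith
  have hcount : ∀ᵐ s ∂μ, ∑ j ∈ Finset.range N, (E j).indicator (fun _ => (1 : ℝ)) s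
      ≤ 9 / t ^ 2 := by
    have hall : ∀ᵐ s ∂μ, ∀ j, B.J (v (σ n) j) s = v' j s := ae_all_iff.mpr hv'e
    filter_upwards [hqn, hq', ha'e, hall] with s e1 e2 e3 e4
    by_cases hs : s ∈ D n
    · rw [Finset.sum_eq_zero]
      · positivity
      · intro j _
        exact Set.indicator_of_notMem (fun h => h.2 hs) _
    by_cases ha0 : a' s = 0
    · rw [Finset.sum_eq_zero]
      · positivity
      · intro j hj
        apply Set.indicator_of_notMem
        intro h
        have h1 := e2 hs j hj
        have h2 : t * |a' s| < |v' j s| := h.1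
        rw [e4 j, e3, ha0] at h1
        rw [ha0] at h2
        simp at h1 h2
        exact h2 h1
    · have hpos : 0 < a' s ^ 2 := by positivity
      have h1 : ∑ j ∈ Finset.range N, (E j).indicator (fun _ => (1 : ℝ)) s * (t ^ 2 * a' s ^ 2)
          ≤ 9 * a' s ^ 2 := by
        rw [← e3]
        refine le_trans (Finset.sum_le_sum fun j _ => ?_) (e1 hs)
        by_cases hE : s ∈ E j
        · have h2 : t * |a' s| < |v' j s| := hE.1
          simp only [hE, Set.indicator_of_mem, one_mul]
          rw [e4 j, e3, ← mul_pow, sq_le_sq, abs_mul, abs_of_pos htpos]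
          exact h2.le
        · simp only [hE, Set.indicator_of_notMem, not_false_eq_true, zero_mul]
          positivity
      rw [← Finset.sum_mul] at h1
      rw [le_div_iff₀ (by positivity)]
      rw [← mul_assoc] at h1
      exact le_of_mul_le_mul_right h1 hpos
  have hint : ∑ j ∈ Finset.range N, μ.real (E j) ≤ 9 / t ^ 2 * μ.real Set.univ := by
    have hi : ∀ j ∈ Finset.range N, Integrable ((E j).indicator (fun _ => (1 : ℝ))) μ :=
      fun j _ => (integrable_const 1).indicator (hEm j)
    have h1 : ∫ s, ∑ j ∈ Finset.range N, (E j).indicator (fun _ => (1 : ℝ)) s ∂μ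
        ≤ ∫ s, 9 / t ^ 2 ∂μ :=
      integral_mono_ae (integrable_finsetSum _ hi) (integrable_const _) hcount
    rw [integral_finsetSum _ hi, integral_const, smul_eq_mul, mul_comm] at h1
    refine le_trans (le_of_eq (Finset.sum_congr rfl fun j _ => ?_)) h1
    rw [integral_indicator_const _ (hEm j)]; simp
  have hlow2 : (N : ℝ) * δ ≤ ∑ j ∈ Finset.range N, μ.real (E j) := by
    have := Finset.card_nsmul_le_sum _ _ _ hEδ
    simpa using this
  linarith

theorem sgn_exists (s : SignedMeasure Ω) : ∃ θ : Ω → ℝ, Measurable θ ∧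
    (∀ ω, θ ω = 1 ∨ θ ω = -1) ∧ ∀ f : Ω → ℝ, Integrable f s.totalVariation →
      ∀ A, MeasurableSet A → sIntegral s f A = ∫ ω in A, f ω * θ ω ∂s.totalVariation := by
  classical
  obtain ⟨u, hu, hp, hn⟩ := s.toJordanDecomposition.mutuallySingular
  let θ : Ω → ℝ := u.piecewise (fun _ => -1) (fun _ => 1)
  have hθm : Measurable θ := Measurable.piecewise hu measurable_const measurable_const
  have hθ : ∀ ω, θ ω = 1 ∨ θ ω = -1 := by
    intro ω
    by_cases h : ω ∈ u <;> simp [θ, h]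
  refine ⟨θ, hθm, hθ, ?_⟩
  intro f hf A hA
  have hfθ : Integrable (fun ω => f ω * θ ω) s.totalVariation := by
    refine hf.mul_bdd (c := 1) hθm.aestronglyMeasurable (Eventually.of_forall fun ω => ?_)
    rcases hθ ω with h | h <;> simp [h]
  rw [SignedMeasure.totalVariation] at hfθ ⊢
  rw [integrable_add_measure] at hfθ
  rw [Measure.restrict_add, integral_add_measure hfθ.1.restrict hfθ.2.restrict, sIntegral,
    sub_eq_add_neg]
  congr 1
  · apply integral_congr_ae
    apply ae_restrict_of_ae
    have : ∀ᵐ ω ∂s.toJordanDecomposition.posPart, ω ∉ u := measure_eq_zero_iff_ae_notMem.mp hp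
    filter_upwards [this] with ω h
    simp [θ, h]
  · rw [← integral_neg]
    apply integral_congr_ae
    apply ae_restrict_of_ae
    have : ∀ᵐ ω ∂s.toJordanDecomposition.negPart, ω ∉ uᶜ := measure_eq_zero_iff_ae_notMem.mp hn
    filter_upwards [this] with ω h
    have : ω ∈ u := by simpa using h
    simp [θ, this]

theorem finite_tv (s : SignedMeasure Ω) : IsFiniteMeasure s.totalVariation := by
  unfold SignedMeasure.totalVariation
  infer_instance

theorem mI_spec {m : VectorMeasure Ω X} {f : Ω → ℝ} (hf : MIntegrable m f) {A : Set Ω}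
    (hA : MeasurableSet A) (x : X →L[ℝ] ℝ) :
    x (mIntegral m f A) = sIntegral (dualApply m x) f A := by
  have h := hf.2.2 A hA
  unfold mIntegral
  rw [dif_pos h]
  exact h.choose_spec x

theorem mI_le {m : VectorMeasure Ω X} {f : Ω → ℝ} (hf : MIntegrable m f) {A : Set Ω}
    (hA : MeasurableSet A) (x : X →L[ℝ] ℝ) :
    |x (mIntegral m f A)| ≤ ∫ ω in A, |f ω| ∂(dualApply m x).totalVariation := by
  obtain ⟨θ, hθm, hθ, H⟩ := sgn_exists (dualApply m x)
  rw [mI_spec hf hA, H f (hf.2.1 x) A hA]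
  refine (abs_integral_le_integral_abs).trans (le_of_eq ?_)
  congr 1
  ext ω
  rcases hθ ω with h | h <;> simp [h]

theorem le_mI {m : VectorMeasure Ω X} {f : Ω → ℝ} (hf : MIntegrable m f) {P : Set Ω}
    (hP : MeasurableSet P) (x : X →L[ℝ] ℝ) :
    ∃ A ⊆ P, MeasurableSet A ∧
      ∫ ω in P, |f ω| ∂(dualApply m x).totalVariation ≤ 2 * |x (mIntegral m f A)| := by
  obtain ⟨θ, hθm, hθ, H⟩ := sgn_exists (dualApply m x)
  have hi := hf.2.1 x
  set ν := (dualApply m x).totalVariation with hν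
  let T : Set Ω := {ω | 0 ≤ f ω * θ ω}
  have hT : MeasurableSet T := measurableSet_le measurable_const (hf.1.mul hθm)
  have h1 : ∫ ω in P, |f ω| ∂ν = (∫ ω in P ∩ T, |f ω| ∂ν) + ∫ ω in P \ T, |f ω| ∂ν :=
    (integral_inter_add_sdiff hT hi.abs.integrableOn).symm
  have habs : ∀ ω, |f ω| = |f ω * θ ω| := by
    intro ω
    rcases hθ ω with h | h <;> simp [h]
  have h2 : ∫ ω in P ∩ T, |f ω| ∂ν = x (mIntegral m f (P ∩ T)) := by
    rw [mI_spec hf (hP.inter hT), H f hi _ (hP.inter hT)]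
    apply setIntegral_congr_fun (hP.inter hT)
    intro ω hω
    have h3 : 0 ≤ f ω * θ ω := hω.2
    simp only []
    rw [habs, abs_of_nonneg h3]
  have h3 : ∫ ω in P \ T, |f ω| ∂ν = - x (mIntegral m f (P \ T)) := by
    rw [mI_spec hf (hP.diff hT), H f hi _ (hP.diff hT), ← integral_neg]
    apply setIntegral_congr_fun (hP.diff hT)
    intro ω hω
    have h3 : f ω * θ ω < 0 := not_le.mp hω.2
    simp only []
    rw [habs, abs_of_neg h3]
  rw [h1, h2, h3]
  rcases le_total (|x (mIntegral m f (P ∩ T))|) (|x (mIntegral m f (P \ T))|) with h | h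
  · refine ⟨P \ T, Set.sdiff_subset, hP.diff hT, ?_⟩
    linarith [le_abs_self (x (mIntegral m f (P ∩ T))), neg_abs_le (x (mIntegral m f (P \ T)))]
  · refine ⟨P ∩ T, Set.inter_subset_left, hP.inter hT, ?_⟩
    linarith [le_abs_self (x (mIntegral m f (P ∩ T))), neg_abs_le (x (mIntegral m f (P \ T)))]

theorem mNorm_bdd {m : VectorMeasure Ω X} {f : Ω → ℝ} (hf : MIntegrable m f) :
    BddAbove (Set.range fun x : {x : X →L[ℝ] ℝ // ‖x‖ ≤ 1} =>
      ∫ ω, |f ω| ∂(dualApply m x.1).totalVariation) := by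
  have hbs : ∃ C', ∀ A : {A : Set Ω // MeasurableSet A},
      ‖NormedSpace.inclusionInDoubleDualLi ℝ (mIntegral m f A.1)‖ ≤ C' := by
    apply banach_steinhaus
    intro x
    refine ⟨∫ ω, |f ω| ∂(dualApply m x).totalVariation, fun A => ?_⟩
    have h1 : ‖(NormedSpace.inclusionInDoubleDualLi ℝ (mIntegral m f A.1)) x‖
      = |x (mIntegral m f A.1)| := rfl
    rw [h1]
    exact (mI_le hf A.2 x).trans (setIntegral_le_integral (hf.2.1 x).abs
      (Eventually.of_forall fun ω => abs_nonneg _))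
  obtain ⟨C, hC⟩ := hbs
  refine ⟨2 * C, ?_⟩
  rintro _ ⟨x, rfl⟩
  obtain ⟨A, -, hA, h⟩ := le_mI hf MeasurableSet.univ x.1
  rw [Measure.restrict_univ] at h
  have h2 := hC ⟨A, hA⟩
  rw [LinearIsometry.norm_map] at h2
  have h3 : |x.1 (mIntegral m f A)| ≤ ‖x.1‖ * ‖mIntegral m f A‖ := x.1.le_opNorm _
  have h4 : ‖x.1‖ * ‖mIntegral m f A‖ ≤ 1 * ‖mIntegral m f A‖ :=
    mul_le_mul_of_nonneg_right x.2 (norm_nonneg _)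
  simp only [] at h2 ⊢
  linarith

theorem le_mNorm {m : VectorMeasure Ω X} {f : Ω → ℝ} (hf : MIntegrable m f) (x : X →L[ℝ] ℝ)
    (hx : ‖x‖ ≤ 1) : ∫ ω, |f ω| ∂(dualApply m x).totalVariation ≤ mNorm m f :=
  le_ciSup (mNorm_bdd hf) (⟨x, hx⟩ : {x : X →L[ℝ] ℝ // ‖x‖ ≤ 1})

theorem mNorm_nonneg (m : VectorMeasure Ω X) (f : Ω → ℝ) : 0 ≤ mNorm m f :=
  Real.iSup_nonneg fun _ => integral_nonneg fun _ => abs_nonneg _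

theorem mNorm_le {m : VectorMeasure Ω X} {f : Ω → ℝ} {c : ℝ}
    (h : ∀ x : X →L[ℝ] ℝ, ‖x‖ ≤ 1 → ∫ ω, |f ω| ∂(dualApply m x).totalVariation ≤ c) :
    mNorm m f ≤ c := by
  have : Nonempty {x : X →L[ℝ] ℝ // ‖x‖ ≤ 1} := ⟨⟨0, by simp⟩⟩
  exact ciSup_le fun x => h x.1 x.2

theorem mNorm_le_add {m : VectorMeasure Ω X} {f g h : Ω → ℝ} (hg : MIntegrable m g)
    (hh : MIntegrable m h) (H : ∀ ω, |f ω| ≤ |g ω| + |h ω|) :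
    mNorm m f ≤ mNorm m g + mNorm m h := by
  apply mNorm_le
  intro x hx
  have h1 : ∫ ω, |f ω| ∂(dualApply m x).totalVariation ≤
      ∫ ω, (|g ω| + |h ω|) ∂(dualApply m x).totalVariation :=
    integral_mono_of_nonneg (Eventually.of_forall fun _ => abs_nonneg _)
      ((hg.2.1 x).abs.add (hh.2.1 x).abs) (Eventually.of_forall H)
  rw [integral_add (hg.2.1 x).abs (hh.2.1 x).abs] at h1
  linarith [le_mNorm hg x hx, le_mNorm hh x hx]

theorem mNorm_le_mul {m : VectorMeasure Ω X} {f g : Ω → ℝ} (hg : MIntegrable m g) {c : ℝ}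
    (hc : 0 ≤ c) (H : ∀ ω, |f ω| ≤ c * |g ω|) :
    mNorm m f ≤ c * mNorm m g := by
  apply mNorm_le
  intro x hx
  have h1 : ∫ ω, |f ω| ∂(dualApply m x).totalVariation ≤
      ∫ ω, (c * |g ω|) ∂(dualApply m x).totalVariation :=
    integral_mono_of_nonneg (Eventually.of_forall fun _ => abs_nonneg _)
      ((hg.2.1 x).abs.const_mul c) (Eventually.of_forall H)
  rw [integral_const_mul] at h1
  exact h1.trans (mul_le_mul_of_nonneg_left (le_mNorm hg x hx) hc)

theorem MIntegrable.indicator {m : VectorMeasure Ω X} {f : Ω → ℝ} (hf : MIntegrable m f)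
    {P : Set Ω} (hP : MeasurableSet P) : MIntegrable m (P.indicator f) := by
  refine ⟨hf.1.indicator hP, fun x => (hf.2.1 x).indicator hP, fun A hA => ?_⟩
  refine ⟨mIntegral m f (A ∩ P), fun x => ?_⟩
  rw [mI_spec hf (hA.inter hP)]
  simp only [sIntegral, setIntegral_indicator hP]

theorem MIntegrable.one (m : VectorMeasure Ω X) : MIntegrable m (fun _ => (1 : ℝ)) := by
  refine ⟨measurable_const, fun x => ?_, fun A hA => ⟨m A, fun x => ?_⟩⟩
  · have := finite_tv (dualApply m x)
    exact integrable_const 1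
  · have h1 : x (m A) = dualApply m x A := rfl
    rw [h1]
    conv_lhs => rw [← SignedMeasure.toSignedMeasure_toJordanDecomposition (dualApply m x)]
    simp only [sIntegral, JordanDecomposition.toSignedMeasure]
    rw [_root_.sub_apply, Measure.toSignedMeasure_apply_measurable hA,
      Measure.toSignedMeasure_apply_measurable hA]
    simp

theorem mI_one (m : VectorMeasure Ω X) {A : Set Ω} (hA : MeasurableSet A) (x : X →L[ℝ] ℝ) :
    x (mIntegral m (fun _ => (1 : ℝ)) A) = x (m A) := by
  rw [mI_spec (MIntegrable.one m) hA]
  have h1 : x (m A) = dualApply m x A := rfl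
  rw [h1]
  conv_rhs => rw [← SignedMeasure.toSignedMeasure_toJordanDecomposition (dualApply m x)]
  simp only [sIntegral, JordanDecomposition.toSignedMeasure]
  rw [_root_.sub_apply, Measure.toSignedMeasure_apply_measurable hA,
    Measure.toSignedMeasure_apply_measurable hA]
  simp

theorem integral_abs_indicator {ν : Measure Ω} {P : Set Ω} (hP : MeasurableSet P) (f : Ω → ℝ) :
    ∫ ω, |P.indicator f ω| ∂ν = ∫ ω in P, |f ω| ∂ν := by
  rw [← integral_indicator hP]
  congr 1
  ext ω
  by_cases h : ω ∈ P <;> simp [h]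

theorem norm_le_of_unit {v : X} {M : ℝ} (h : ∀ x : X →L[ℝ] ℝ, ‖x‖ ≤ 1 → |x v| ≤ M) :
    ‖v‖ ≤ M := by
  obtain ⟨g, hg, hgv⟩ := exists_dual_vector'' ℝ v
  have := h g hg
  rw [hgv] at this
  simpa using this

theorem lt_mNorm {m : VectorMeasure Ω X} {f : Ω → ℝ} {P : Set Ω}
    (hP : MeasurableSet P) {ε : ℝ} (h : ε < mNorm m (P.indicator f)) :
    ∃ x : X →L[ℝ] ℝ, ‖x‖ ≤ 1 ∧ ε < ∫ ω in P, |f ω| ∂(dualApply m x).totalVariation := by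
  have : Nonempty {x : X →L[ℝ] ℝ // ‖x‖ ≤ 1} := ⟨⟨0, by simp⟩⟩
  obtain ⟨x, hx⟩ := exists_lt_of_lt_ciSup h
  rw [integral_abs_indicator hP] at hx
  exact ⟨x.1, x.2, hx⟩

theorem exists_big {m : VectorMeasure Ω X} {f : Ω → ℝ} (hf : MIntegrable m f) {P : Set Ω}
    (hP : MeasurableSet P) {ε : ℝ} {x : X →L[ℝ] ℝ} (hx : ‖x‖ ≤ 1)
    (h : ε < ∫ ω in P, |f ω| ∂(dualApply m x).totalVariation) :
    ∃ A ⊆ P, MeasurableSet A ∧ ε / 2 ≤ ‖mIntegral m f A‖ := by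
  obtain ⟨A, hAP, hA, h1⟩ := le_mI hf hP x
  refine ⟨A, hAP, hA, ?_⟩
  have h3 : |x (mIntegral m f A)| ≤ ‖x‖ * ‖mIntegral m f A‖ := x.le_opNorm _
  have h4 : ‖x‖ * ‖mIntegral m f A‖ ≤ 1 * ‖mIntegral m f A‖ :=
    mul_le_mul_of_nonneg_right hx (norm_nonneg _)
  linarith

theorem norm_sum_mI_le {m : VectorMeasure Ω X} {f : Ω → ℝ} (hf : MIntegrable m f) {A : ℕ → Set Ω}
    (hA : ∀ j, MeasurableSet (A j)) (hd : Pairwise (Function.onFun Disjoint A)) (n : ℕ)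
    (θ : ℕ → ℝ) (hθ : ∀ j, |θ j| ≤ 1) :
    ‖∑ j ∈ Finset.range n, θ j • mIntegral m f (A j)‖ ≤ mNorm m f := by
  apply norm_le_of_unit
  intro x hx
  refine le_trans ?_ (le_mNorm hf x hx)
  rw [map_sum]
  refine (Finset.abs_sum_le_sum_abs _ _).trans ?_
  have h1 : ∀ j ∈ Finset.range n, |x (θ j • mIntegral m f (A j))|
      ≤ ∫ ω in A j, |f ω| ∂(dualApply m x).totalVariation := by
    intro j _
    rw [map_smul, smul_eq_mul, abs_mul]
    refine le_trans ?_ (mI_le hf (hA j) x)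
    exact mul_le_of_le_one_left (abs_nonneg _) (hθ j)
  refine (Finset.sum_le_sum h1).trans ?_
  rw [← integral_biUnion_finset (Finset.range n) (fun j _ => hA j)
    (fun i _ j _ hij => hd hij) (fun j _ => (hf.2.1 x).abs.integrableOn)]
  exact setIntegral_le_integral (hf.2.1 x).abs (Eventually.of_forall fun ω => abs_nonneg _)

theorem keyM [IsFiniteMeasure μ] {B : BFS S μ X} (hX : B.SSP) {m : VectorMeasure Ω X}
    (F : ℕ → Ω → ℝ) (hF : ∀ n, MIntegrable m (F n)) (C : ℝ) (hC : ∀ n, mNorm m (F n) ≤ C)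
    (A : ℕ → ℕ → Set Ω) (hA : ∀ n j, MeasurableSet (A n j))
    (hd : ∀ n, Pairwise (Function.onFun Disjoint (A n))) (ε : ℝ) (hε : 0 < ε)
    (hlow : ∀ n j, j < n → ε ≤ ‖mIntegral m (F n) (A n j)‖)
    (hac : ∀ j, B.UnifAC (Set.range fun n => mIntegral m (F n) (A n j))) : False :=
  BFS.key hX (fun n j => mIntegral m (F n) (A n j)) C ε hε
    (fun n θ hθ => (norm_sum_mI_le (hF n) (hA n) (hd n) n θ hθ).trans (hC n)) hac hlow

theorem ac_of_bounded {B : BFS S μ X} {m : VectorMeasure Ω X}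
    (hrange : B.UnifAC {x : X | ∃ A : Set Ω, MeasurableSet A ∧ m A = x})
    (F : ℕ → Ω → ℝ) (hF : ∀ n, MIntegrable m (F n)) (A : ℕ → Set Ω)
    (hA : ∀ n, MeasurableSet (A n)) (k : ℝ) (hk : 0 < k) (hb : ∀ n, ∀ ω ∈ A n, |F n ω| ≤ k) :
    B.UnifAC (Set.range fun n => mIntegral m (F n) (A n)) := by
  intro ε hε
  obtain ⟨δ, hδ, H⟩ := hrange (ε / (2 * k)) (by positivity)
  refine ⟨δ, hδ, ?_⟩
  rintro E hE hμ _ ⟨n, rfl⟩ y hy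
  obtain ⟨R, hR, -⟩ := B.exists_res hE
  have hyR : y = R (mIntegral m (F n) (A n)) := B.ext' (hy.trans (hR _).symm)
  rw [hyR]
  apply norm_le_of_unit
  intro x hx
  let z : X →L[ℝ] ℝ := x.comp R
  change |z (mIntegral m (F n) (A n))| ≤ ε
  refine (mI_le (hF n) (hA n) z).trans ?_
  have := finite_tv (dualApply m z)
  have h1 : ∫ ω in A n, |F n ω| ∂(dualApply m z).totalVariation ≤
      ∫ ω in A n, k * |(1 : ℝ)| ∂(dualApply m z).totalVariation := by
    apply setIntegral_mono_on ((hF n).2.1 z).abs.integrableOn (integrable_const _).integrableOn (hA n)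
    intro ω hω
    simpa using hb n ω hω
  rw [integral_const_mul] at h1
  obtain ⟨G, -, hG, h2⟩ := le_mI (MIntegrable.one m) (hA n) z
  rw [mI_one m hG] at h2
  have h3 : |z (m G)| ≤ ε / (2 * k) := by
    have h4 : ‖R (m G)‖ ≤ ε / (2 * k) := H E hE hμ (m G) ⟨G, hG, rfl⟩ _ (hR _)
    have h5 : |x (R (m G))| ≤ ‖x‖ * ‖R (m G)‖ := x.le_opNorm _
    have h6 : ‖x‖ * ‖R (m G)‖ ≤ 1 * ‖R (m G)‖ :=
      mul_le_mul_of_nonneg_right hx (norm_nonneg _)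
    change |x (R (m G))| ≤ _
    linarith
  calc _ ≤ _ := h1
    _ ≤ k * (2 * (ε / (2 * k))) := by
      apply mul_le_mul_of_nonneg_left _ hk.le
      exact h2.trans (mul_le_mul_of_nonneg_left h3 (by norm_num))
    _ = ε := by field_simp

theorem ac_norm [IsFiniteMeasure μ] {B : BFS S μ X} (hX : B.SSP) {m : VectorMeasure Ω X}
    (x₀ : X →L[ℝ] ℝ)
    (hRyb : ∀ A : Set Ω, MeasurableSet A →
      ((dualApply m x₀).totalVariation A = 0 ↔ semivar m A = 0))
    {f : Ω → ℝ} (hf : MIntegrable m f) (ε : ℝ) (hε : 0 < ε) :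
    ∃ δ : ℝ, 0 < δ ∧ ∀ A : Set Ω, MeasurableSet A →
      (dualApply m x₀).totalVariation A < ENNReal.ofReal δ → mNorm m (A.indicator f) ≤ ε := by
  by_contra hcon
  push Not at hcon
  set η := (dualApply m x₀).totalVariation with hη
  obtain ⟨e, he, hesum⟩ := ENNReal.exists_pos_sum_of_countable (ε := 1) one_ne_zero ℕ
  choose A hA hAη hAn using fun k => hcon (e k : ℝ) (by exact_mod_cast he k)
  let T : ℕ → Set Ω := fun k => ⋃ i ≥ k, A i
  have hTm : ∀ k, MeasurableSet (T k) := fun k =>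
    MeasurableSet.iUnion fun i => MeasurableSet.iUnion fun _ => hA i
  have hTanti : Antitone T := by
    intro k l hkl
    exact Set.biUnion_subset_biUnion_left fun i (hi : l ≤ i) => hkl.trans hi
  have hAT : ∀ k, A k ⊆ T k := fun k =>
    Set.subset_biUnion_of_mem (u := fun i => A i) (show k ∈ {i | i ≥ k} from le_refl k)
  have hTnull : η (⋂ k, T k) = 0 := by
    have h1 : ∑' i, η (A i) ≠ ⊤ := by
      refine ne_top_of_le_ne_top (ne_top_of_lt hesum) (ENNReal.tsum_le_tsum fun i => ?_)
      have := (hAη i).le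
      rwa [ENNReal.ofReal_coe_nnreal] at this
    have h2 := measure_limsup_atTop_eq_zero h1
    rw [limsup_eq_iInf_iSup_of_nat] at h2
    exact h2
  have hstep : ∀ k, ∃ j, k < j ∧ ∃ x : X →L[ℝ] ℝ, ‖x‖ ≤ 1 ∧
      ε < ∫ ω in T k \ T j, |f ω| ∂(dualApply m x).totalVariation := by
    intro k
    obtain ⟨x, hx, hlt⟩ := lt_mNorm (hA k) (hAn k)
    set ν := (dualApply m x).totalVariation with hν
    have hfi : Integrable (fun ω => |f ω|) ν := (hf.2.1 x).abs
    have h1 : ε < ∫ ω in T k, |f ω| ∂ν :=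
      hlt.trans_le (setIntegral_mono_set hfi.integrableOn
        (Eventually.of_forall fun ω => abs_nonneg _) (hAT k).eventuallyLE)
    have hnull : ν (⋂ k, T k) = 0 := by
      have h2 := (hRyb _ (MeasurableSet.iInter hTm)).mp hTnull
      have h3 : ν (⋂ k, T k) ≤ semivar m (⋂ k, T k) :=
        le_iSup (fun x : {x : X →L[ℝ] ℝ // ‖x‖ ≤ 1} =>
          (dualApply m x.1).totalVariation (⋂ k, T k)) ⟨x, hx⟩
      rw [h2] at h3
      exact le_antisymm h3 (zero_le)
    have hlim := tendsto_setIntegral_of_antitone hTm hTanti ⟨0, hfi.integrableOn (s := T 0)⟩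
    rw [setIntegral_measure_zero _ hnull] at hlim
    have hev := (hlim.eventually_lt_const (sub_pos.mpr h1)).and (eventually_gt_atTop k)
    obtain ⟨j, hj1, hj2⟩ := hev.exists
    refine ⟨j, hj2, x, hx, ?_⟩
    have h4 : ∫ ω in T k \ T j, |f ω| ∂ν = (∫ ω in T k, |f ω| ∂ν) - ∫ ω in T j, |f ω| ∂ν :=
      setIntegral_sdiff (hTm j) hfi.integrableOn (hTanti hj2.le)
    rw [h4]
    linarith
  choose nx hnx1 hnx2 using hstep
  let κ : ℕ → ℕ := fun i => nx^[i] 0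
  have hκ : ∀ i, κ (i + 1) = nx (κ i) := fun i => Function.iterate_succ_apply' nx i 0
  have hκm : StrictMono κ := strictMono_nat_of_lt_succ fun i => by rw [hκ]; exact hnx1 _
  have hbig : ∀ i, ∃ A' ⊆ T (κ i) \ T (κ (i + 1)), MeasurableSet A' ∧
      ε / 2 ≤ ‖mIntegral m f A'‖ := by
    intro i
    obtain ⟨x, hx, hlt⟩ := hnx2 (κ i)
    rw [← hκ] at hlt
    exact exists_big hf ((hTm _).diff (hTm _)) hx hlt
  choose A' hA'sub hA'm hA'n using hbig
  have hdisj' : ∀ i j, i < j → Disjoint (A' i) (A' j) := by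
    intro i j hij
    rw [Set.disjoint_left]
    intro ω h1 h2
    exact (hA'sub i h1).2 (hTanti (hκm.monotone hij) (hA'sub j h2).1)
  have hdisj : Pairwise (Function.onFun Disjoint A') := by
    intro i j hij
    rcases lt_or_gt_of_ne hij with h | h
    · exact hdisj' i j h
    · exact (hdisj' j i h).symm
  refine keyM hX (fun _ => f) (fun _ => hf) (mNorm m f) (fun _ => le_rfl) (fun _ => A')
    (fun _ => hA'm) (fun _ => hdisj) (ε / 2) (by positivity) (fun _ j _ => hA'n j) ?_
  intro j
  rw [Set.range_const]
  exact hX.acNorm _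

theorem trunc [IsFiniteMeasure μ] {B : BFS S μ X} (hX : B.SSP) {m : VectorMeasure Ω X}
    (hrange : B.UnifAC {x : X | ∃ A : Set Ω, MeasurableSet A ∧ m A = x})
    (f : ℕ → Ω → ℝ) (hf : ∀ n, MIntegrable m (f n)) (C : ℝ) (hC : ∀ n, mNorm m (f n) ≤ C)
    (ε : ℝ) (hε : 0 < ε) :
    ∃ k : ℕ, ∀ K : ℕ, ∀ᶠ n in (hyperfilter ℕ : Filter ℕ),
      mNorm m ({ω | (k : ℝ) < |f n ω| ∧ |f n ω| ≤ K}.indicator (f n)) ≤ ε := by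
  by_contra hcon
  push Not at hcon
  have hPm : ∀ (n k K : ℕ), MeasurableSet {ω | (k : ℝ) < |f n ω| ∧ |f n ω| ≤ K} := fun n k K =>
    (measurableSet_lt measurable_const (hf n).1.abs).inter
      (measurableSet_le (hf n).1.abs measurable_const)
  have hcon' : ∀ k : ℕ, ∃ K : ℕ, ∀ᶠ n in (hyperfilter ℕ : Filter ℕ),
      ε < mNorm m ({ω | (k : ℝ) < |f n ω| ∧ |f n ω| ≤ K}.indicator (f n)) := by
    intro k
    obtain ⟨K, hK⟩ := hcon k
    refine ⟨K, ?_⟩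
    exact hK
  choose nx hnx using hcon'
  have hlt : ∀ k, k < nx k := by
    intro k
    by_contra hle
    push Not at hle
    obtain ⟨n, hn⟩ := (hnx k).exists
    have hempty : {ω | (k : ℝ) < |f n ω| ∧ |f n ω| ≤ nx k} = ∅ := by
      ext ω
      simp only [Set.mem_ofPred_eq, Set.mem_empty_iff_false, iff_false, not_and, not_le]
      intro h
      exact lt_of_le_of_lt (by exact_mod_cast hle) h
    rw [hempty] at hn
    have : mNorm m ((∅ : Set Ω).indicator (f n)) ≤ 0 := mNorm_le (by simp)
    linarith
  let κ : ℕ → ℕ := fun i => nx^[i] 0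
  have hκ : ∀ i, κ (i + 1) = nx (κ i) := fun i => Function.iterate_succ_apply' nx i 0
  have hκm : StrictMono κ := strictMono_nat_of_lt_succ fun i => by rw [hκ]; exact hlt _
  have hp : ∀ N : ℕ, ∃ n, ∀ j ∈ Finset.range N,
      ε < mNorm m ({ω | (κ j : ℝ) < |f n ω| ∧ |f n ω| ≤ κ (j + 1)}.indicator (f n)) := by
    intro N
    have : ∀ᶠ n in (hyperfilter ℕ : Filter ℕ), ∀ j ∈ Finset.range N,
      ε < mNorm m ({ω | (κ j : ℝ) < |f n ω| ∧ |f n ω| ≤ κ (j + 1)}.indicator (f n)) := by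
      rw [Filter.eventually_all_finset]
      intro j _
      rw [hκ]
      exact hnx (κ j)
    exact this.exists
  choose p hp using hp
  have hA : ∀ N j : ℕ, ∃ A ⊆ {ω | (κ j : ℝ) < |f (p N) ω| ∧ |f (p N) ω| ≤ κ (j + 1)},
      MeasurableSet A ∧ (j < N → ε / 2 ≤ ‖mIntegral m (f (p N)) A‖) := by
    intro N j
    by_cases hj : j < N
    · obtain ⟨x, hx, hlt⟩ := lt_mNorm (hPm _ _ _) (hp N j (Finset.mem_range.mpr hj))
      obtain ⟨A, h1, h2, h3⟩ := exists_big (hf (p N)) (hPm _ _ _) hx hlt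
      exact ⟨A, h1, h2, fun _ => h3⟩
    · exact ⟨∅, Set.empty_subset _, MeasurableSet.empty, fun h => absurd h hj⟩
  choose A hAsub hAm hAn using hA
  have hdisj' : ∀ N i j, i < j → Disjoint (A N i) (A N j) := by
    intro N i j hij
    rw [Set.disjoint_left]
    intro ω h1 h2
    have h3 : |f (p N) ω| ≤ κ (i + 1) := (hAsub N i h1).2
    have h4 : (κ j : ℝ) < |f (p N) ω| := (hAsub N j h2).1
    have h5 : ((κ (i + 1) : ℕ) : ℝ) ≤ κ j := by exact_mod_cast hκm.monotone hij
    linarith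
  refine keyM hX (fun N => f (p N)) (fun N => hf _) C (fun N => hC _) A hAm ?_ (ε / 2)
    (by positivity) (fun N j hj => hAn N j hj) ?_
  · intro N i j hij
    rcases lt_or_gt_of_ne hij with h | h
    · exact hdisj' N i j h
    · exact (hdisj' N j i h).symm
  · intro j
    refine ac_of_bounded hrange (fun N => f (p N)) (fun N => hf _) (fun N => A N j)
      (fun N => hAm N j) (κ (j + 1)) ?_ (fun N ω hω => (hAsub N j hω).2)
    have : 0 < κ (j + 1) := lt_of_le_of_lt (Nat.zero_le _) (hκm (Nat.lt_succ_self j))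
    exact_mod_cast this

theorem integral_eta_le {m : VectorMeasure Ω X} (x₀ : X →L[ℝ] ℝ) {f : Ω → ℝ}
    (hf : MIntegrable m f) :
    ∫ ω, |f ω| ∂(dualApply m x₀).totalVariation ≤ 2 * (‖x₀‖ * mNorm m f) := by
  obtain ⟨A, -, hA, h⟩ := le_mI hf MeasurableSet.univ x₀
  rw [Measure.restrict_univ] at h
  have h1 : ‖mIntegral m f A‖ ≤ mNorm m f := by
    apply norm_le_of_unit
    intro x hx
    exact ((mI_le hf hA x).trans (setIntegral_le_integral (hf.2.1 x).abs
      (Eventually.of_forall fun ω => abs_nonneg _))).trans (le_mNorm hf x hx)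
  have h3 : |x₀ (mIntegral m f A)| ≤ ‖x₀‖ * ‖mIntegral m f A‖ := x₀.le_opNorm _
  have h4 : ‖x₀‖ * ‖mIntegral m f A‖ ≤ ‖x₀‖ * mNorm m f :=
    mul_le_mul_of_nonneg_left h1 (norm_nonneg _)
  linarith

theorem main_aux [IsFiniteMeasure μ] {B : BFS S μ X} (hX : B.SSP) {m : VectorMeasure Ω X}
    (hrange : B.UnifAC {x : X | ∃ A : Set Ω, MeasurableSet A ∧ m A = x})
    (x₀ : X →L[ℝ] ℝ)
    (hRyb : ∀ A : Set Ω, MeasurableSet A →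
      ((dualApply m x₀).totalVariation A = 0 ↔ semivar m A = 0)) :
    HasSSP ((dualApply m x₀).totalVariation) (MIntegrable m) (mNorm m) := by
  rintro f hf ⟨C, hC⟩
  have hac := fun {f : Ω → ℝ} (hf : MIntegrable m f) => ac_norm hX x₀ hRyb hf
  set η := (dualApply m x₀).totalVariation with hη
  have hfin : IsFiniteMeasure η := finite_tv _
  choose k hk using fun i : ℕ => trunc hX hrange f hf C hC ((1 / 2 : ℝ) ^ i) (by positivity)
  obtain ⟨σ, hσ, hσP⟩ := extraction_forall_of_frequently
    (P := fun l n => ∀ i ∈ Finset.range (l + 1),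
      mNorm m ({ω | (k i : ℝ) < |f n ω| ∧ |f n ω| ≤ l}.indicator (f n)) ≤ (1 / 2 : ℝ) ^ i)
    (by
      intro l
      have h1 : ∀ᶠ n in (hyperfilter ℕ : Filter ℕ), ∀ i ∈ Finset.range (l + 1),
          mNorm m ({ω | (k i : ℝ) < |f n ω| ∧ |f n ω| ≤ l}.indicator (f n)) ≤ (1 / 2 : ℝ) ^ i := by
        rw [Filter.eventually_all_finset]
        intro i _
        exact hk i l
      exact h1.frequently.filter_mono Nat.hyperfilter_le_atTop)
  let F : ℕ → Ω → ℝ := fun l => f (σ l)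
  have hF : ∀ l, MIntegrable m (F l) := fun l => hf _
  let T : ℕ → Set Ω := fun l => {ω | (l : ℝ) < |F l ω|}
  have hTm : ∀ l, MeasurableSet (T l) := fun l => measurableSet_lt measurable_const (hF l).1.abs
  have hTlim : Tendsto (fun l => η (T l)) atTop (nhds 0) := by
    have hbound : ∀ l : ℕ, η (T l) ≤ ENNReal.ofReal (2 * (‖x₀‖ * C) / l) ∨ l = 0 := by
      intro l
      rcases Nat.eq_zero_or_pos l with h0 | hpos
      · exact Or.inr h0
      left
      have hpos' : (0 : ℝ) < l := by exact_mod_cast hpos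
      have h1 := mul_meas_ge_le_integral_of_nonneg (μ := η) (f := fun ω => |F l ω|)
        (Eventually.of_forall fun ω => abs_nonneg _) ((hF l).2.1 x₀).abs (l : ℝ)
      have h2 : ∫ ω, |F l ω| ∂η ≤ 2 * (‖x₀‖ * mNorm m (F l)) := integral_eta_le x₀ (hF l)
      have h3 : ‖x₀‖ * mNorm m (F l) ≤ ‖x₀‖ * C :=
        mul_le_mul_of_nonneg_left (hC _) (norm_nonneg _)
      have h4 : η.real (T l) ≤ η.real {ω | (l : ℝ) ≤ |F l ω|} :=
        measureReal_mono (fun ω (hω : (l : ℝ) < |F l ω|) => hω.le)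
      have h5 : (l : ℝ) * η.real (T l) ≤ (l : ℝ) * η.real {ω | (l : ℝ) ≤ |F l ω|} :=
        mul_le_mul_of_nonneg_left h4 hpos'.le
      have h6 : η.real (T l) ≤ 2 * (‖x₀‖ * C) / l := by
        rw [le_div_iff₀ hpos', mul_comm]
        linarith
      rw [← ENNReal.ofReal_toReal (measure_ne_top η (T l))]
      exact ENNReal.ofReal_le_ofReal h6
    have hlim : Tendsto (fun l : ℕ => ENNReal.ofReal (2 * (‖x₀‖ * C) / l)) atTop (nhds 0) := by
      have := ENNReal.tendsto_ofReal (tendsto_const_div_atTop_nhds_zero_nat (2 * (‖x₀‖ * C)))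
      simpa using this
    refine tendsto_of_tendsto_of_tendsto_of_le_of_le' tendsto_const_nhds hlim
      (Eventually.of_forall fun _ => zero_le) ?_
    filter_upwards [eventually_gt_atTop 0] with l hl
    rcases hbound l with h | h
    · exact h
    · omega
  choose δ hδ hδac using fun l => hac (hF l) ((1 / 2 : ℝ) ^ l) (by positivity)
  choose e he hesum using fun l => ENNReal.exists_pos_sum_of_countable
    (ε := ENNReal.ofReal (δ l)) (by simpa using hδ l) ℕ
  -- quantities that pick the sparse subsequence
  have hTlim' : ∀ c : ℝ≥0∞, 0 < c → ∀ᶠ l in atTop, η (T l) < c := fun c hc =>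
    hTlim.eventually_lt_const hc
  obtain ⟨w, hw, hwrel⟩ := exists_seq_of_forall_finset_exists (α := ℕ × ℕ)
    (fun _ => True)
    (fun x y => x.1 < y.1 ∧ x.2 < y.2 ∧ η (T y.1) ≤ e x.1 y.2) (by
      intro s _
      let M := s.sup Prod.snd + 1
      have hM : ∀ x ∈ s, x.2 < M := fun x hx => Nat.lt_succ_of_le (Finset.le_sup (f := Prod.snd) hx)
      have hev : ∀ᶠ l in atTop, ∀ x ∈ s, x.1 < l ∧ η (T l) < e x.1 M := by
        rw [Filter.eventually_all_finset]
        intro x _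
        exact (eventually_gt_atTop x.1).and (hTlim' _ (by exact_mod_cast he x.1 M))
      obtain ⟨l, hl⟩ := hev.exists
      exact ⟨(l, M), trivial, fun x hx => ⟨(hl x hx).1, hM x hx, (hl x hx).2.le⟩⟩)
  let τ : ℕ → ℕ := fun i => (w i).1
  let ζ : ℕ → ℕ := fun i => (w i).2
  have hτ : StrictMono τ := fun i j hij => (hwrel i j hij).1
  have hζ : StrictMono ζ := fun i j hij => (hwrel i j hij).2.1
  let V : ℕ → Set Ω := fun l => ⋃ j, ⋃ (_ : l < j), T (τ j)
  have hVm : ∀ l, MeasurableSet (V l) := fun l =>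
    MeasurableSet.iUnion fun y => MeasurableSet.iUnion fun _ => hTm _
  have hVη : ∀ l, η (V l) < ENNReal.ofReal (δ (τ l)) := by
    intro l
    refine lt_of_le_of_lt ?_ (hesum (τ l))
    refine (measure_iUnion_le _).trans ?_
    refine le_trans (ENNReal.tsum_le_tsum (g := fun j => (e (τ l) (ζ j) : ℝ≥0∞)) fun j => ?_) ?_
    · by_cases h : l < j
      · simp only [h, Set.iUnion_true]
        exact (hwrel l j h).2.2
      · simp [h]
    · exact ENNReal.tsum_comp_le_tsum_of_injective hζ.injective (fun y => (e (τ l) y : ℝ≥0∞))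
  have hVnorm : ∀ l, mNorm m ((V l).indicator (F (τ l))) ≤ (1 / 2 : ℝ) ^ (τ l) := fun l =>
    hδac (τ l) (V l) (hVm l) (hVη l)
  let D : ℕ → Set Ω := fun l => T (τ l) \ V l
  have hDm : ∀ l, MeasurableSet (D l) := fun l => (hTm _).diff (hVm l)
  have hDd' : ∀ i j, i < j → Disjoint (D i) (D j) := by
    intro i j hij
    rw [Set.disjoint_left]
    intro ω h1 h2
    exact h1.2 (Set.mem_iUnion.mpr ⟨j, Set.mem_iUnion.mpr ⟨hij, h2.1⟩⟩)
  have hDd : ∀ i j, i ≠ j → Disjoint (D i) (D j) := by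
    intro i j hij
    rcases lt_or_gt_of_ne hij with h | h
    · exact hDd' i j h
    · exact (hDd' j i h).symm
  refine ⟨σ ∘ τ, hσ.comp hτ, fun l => (D l)ᶜ.indicator (F (τ l)), fun l => (D l).indicator (F (τ l)),
    fun l => (hF _).indicator (hDm l).compl, fun l => (hF _).indicator (hDm l), ?_, ?_, ?_, ?_⟩
  · intro l
    exact (Set.indicator_compl_add_self (D l) (F (τ l))).symm
  · intro l
    refine Eventually.of_forall fun ω => ?_
    by_cases h : ω ∈ D l <;> simp [h]
  · intro ε hε
    obtain ⟨i, hi⟩ := exists_pow_lt_of_lt_one (show 0 < ε / 3 by positivity)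
      (show (1 / 2 : ℝ) < 1 by norm_num)
    obtain ⟨δ₁, hδ₁, H₁⟩ := hac (MIntegrable.one m) (ε / (3 * ((k i : ℝ) + 1))) (by positivity)
    choose δ₂ hδ₂ H₂ using fun l => hac (hF l) ε hε
    have hev : ∀ᶠ t in 𝓝[>] (0 : ℝ), (∀ l ∈ Finset.range i, t < δ₂ l) ∧ t < δ₁ := by
      refine Eventually.and ?_ ?_
      · rw [Filter.eventually_all_finset]
        intro l _
        exact nhdsWithin_le_nhds (eventually_lt_nhds (hδ₂ l))
      · exact nhdsWithin_le_nhds (eventually_lt_nhds hδ₁)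
    obtain ⟨t, ⟨ht2, ht1⟩, ht0⟩ := (hev.and self_mem_nhdsWithin).exists
    refine ⟨t, ht0, ?_⟩
    rintro A hA hAη _ ⟨l, rfl⟩
    set x := τ l with hx
    rcases lt_or_ge x i with hxi | hxi
    · have h1 : mNorm m (A.indicator (F x)) ≤ ε :=
        H₂ x A hA (hAη.trans_le (ENNReal.ofReal_le_ofReal (ht2 x (Finset.mem_range.mpr hxi)).le))
      have h2 : mNorm m (A.indicator ((D l)ᶜ.indicator (F x)))
          ≤ 1 * mNorm m (A.indicator (F x)) := by
        apply mNorm_le_mul ((hF x).indicator hA) zero_le_one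
        intro ω
        by_cases h : ω ∈ A <;> by_cases h' : ω ∈ D l <;> simp [h, h']
      linarith
    · let Q : Set Ω := {ω | (k i : ℝ) < |F x ω| ∧ |F x ω| ≤ x}
      have hQm : MeasurableSet Q := (measurableSet_lt measurable_const (hF x).1.abs).inter
        (measurableSet_le (hF x).1.abs measurable_const)
      have hQ : mNorm m (Q.indicator (F x)) ≤ (1 / 2 : ℝ) ^ i :=
        hσP x i (Finset.mem_range.mpr (by omega))
      let L : Set Ω := {ω | |F x ω| ≤ (k i : ℝ)}
      have hLm : MeasurableSet L := measurableSet_le (hF x).1.abs measurable_const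
      let W : Set Ω := A ∩ (T x)ᶜ
      have hWm : MeasurableSet W := hA.inter (hTm x).compl
      have h1 : mNorm m (A.indicator ((D l)ᶜ.indicator (F x)))
          ≤ mNorm m (W.indicator (F x)) + mNorm m ((V l).indicator (F x)) := by
        apply mNorm_le_add ((hF x).indicator hWm) ((hF x).indicator (hVm l))
        intro ω
        have hp := abs_nonneg (F x ω)
        by_cases h : ω ∈ A <;> by_cases h' : ω ∈ T x <;> by_cases h'' : ω ∈ V l <;>
          simp [W, D, h, h', h'', ← hx, Set.indicator]
      have h2 : mNorm m (W.indicator (F x))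
          ≤ mNorm m ((A ∩ L).indicator (F x)) + mNorm m (Q.indicator (F x)) := by
        apply mNorm_le_add ((hF x).indicator (hA.inter hLm)) ((hF x).indicator hQm)
        intro ω
        by_cases h : ω ∈ W
        · rw [Set.indicator_of_mem h]
          by_cases h' : ω ∈ L
          · rw [Set.indicator_of_mem (show ω ∈ A ∩ L from ⟨h.1, h'⟩)]
            linarith [abs_nonneg (Q.indicator (F x) ω)]
          · have hq : ω ∈ Q := ⟨not_le.mp h', not_lt.mp h.2⟩
            rw [Set.indicator_of_mem hq]
            linarith [abs_nonneg ((A ∩ L).indicator (F x) ω)]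
        · rw [Set.indicator_of_notMem h, abs_zero]
          positivity
      have h3 : mNorm m ((A ∩ L).indicator (F x))
          ≤ k i * mNorm m (A.indicator (fun _ => (1 : ℝ))) := by
        apply mNorm_le_mul ((MIntegrable.one m).indicator hA) (Nat.cast_nonneg _)
        intro ω
        by_cases h : ω ∈ A
        · by_cases h' : ω ∈ L
          · rw [Set.indicator_of_mem (show ω ∈ A ∩ L from ⟨h, h'⟩), Set.indicator_of_mem h]
            have h'' : |F x ω| ≤ (k i : ℝ) := h'
            simpa using h''
          · rw [Set.indicator_of_notMem (fun hh : ω ∈ A ∩ L => h' hh.2)]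
            rw [abs_zero]
            positivity
        · rw [Set.indicator_of_notMem (fun hh : ω ∈ A ∩ L => h hh.1)]
          simp [h]
      have h4 : mNorm m (A.indicator (fun _ => (1 : ℝ))) ≤ ε / (3 * ((k i : ℝ) + 1)) :=
        H₁ A hA (hAη.trans_le (ENNReal.ofReal_le_ofReal ht1.le))
      have h5 : (k i : ℝ) * mNorm m (A.indicator (fun _ => (1 : ℝ))) ≤ ε / 3 := by
        have hk0 : (0 : ℝ) ≤ k i := Nat.cast_nonneg _
        calc (k i : ℝ) * mNorm m (A.indicator (fun _ => (1 : ℝ)))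
            ≤ ((k i : ℝ) + 1) * (ε / (3 * ((k i : ℝ) + 1))) :=
              mul_le_mul (by linarith) h4 (mNorm_nonneg _ _) (by linarith)
          _ = ε / 3 := by field_simp
      have h6 : (1 / 2 : ℝ) ^ x ≤ (1 / 2 : ℝ) ^ i :=
        pow_le_pow_of_le_one (by norm_num) (by norm_num) hxi
      have h7 := hVnorm l
      rw [← hx] at h7
      linarith
  · intro i j hij
    refine Eventually.of_forall fun ω => ?_
    by_cases h : ω ∈ D i
    · have : ω ∉ D j := Set.disjoint_left.mp (hDd i j hij) h
      simp [this]
    · simp [h]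

/-- if `X` and `X*` have the subsequence splitting property and the range of `m`
has uniformly a.c. norm in `X`, then `L¹(m)` (over a Rybakov control measure) has the
subsequence splitting property. -/
theorem statement1
    {S : Type*} [MeasurableSpace S] {μ : Measure S} [IsFiniteMeasure μ]
    {X : Type*} [NormedAddCommGroup X] [NormedSpace ℝ X] [CompleteSpace X]
    (B : BFS S μ X)
    {Ω : Type*} [MeasurableSpace Ω] (m : VectorMeasure Ω X)
    (hX : B.SSP)
    (B' : BFS S μ (X →L[ℝ] ℝ))
    (hB'rep : ∀ (φ : X →L[ℝ] ℝ) (x : X), φ x = ∫ s, B.J x s * B'.J φ s ∂μ)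
    (hXdual : B'.SSP)
    (hrange : B.UnifAC {x : X | ∃ A : Set Ω, MeasurableSet A ∧ m A = x})
    (x₀ : X →L[ℝ] ℝ)
    (hRyb : ∀ A : Set Ω, MeasurableSet A →
      ((dualApply m x₀).totalVariation A = 0 ↔ semivar m A = 0)) :
    HasSSP ((dualApply m x₀).totalVariation) (MIntegrable m) (mNorm m) := by
  exact main_aux hX hrange x₀ hRyb

end Paper
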